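/- arXiv:2103.14726 — 3 statements merged into one kernel-verified Lean document; each statement's English description precedes it below -/
import Mathlib

section
/- Let n ≥ 3 and let K_n be the complete graph on n vertices, with A(L(K_n)) the adjacency matrix of its line graph (a symmetric matrix of order C(n,2)). Then charpoly(A(L(K_n))) = (X − (2n−4)) · (X − (n−4))^{n−1} · (X + 2)^{C(n,2)−n}; that is, the eigenvalues of A(L(K_n)) are 2n−4 (simple), n−4 with multiplicity n−1, and −2 with multiplicity C(n,2)−n. -/
open scoped Classical
open Matrix Polynomial

noncomputable section

/-- The adjacency matrix (over `ℝ`) of the line graph of `G`: rows and columns are indexed by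
the edges of `G`, with entry `1` when the two edges are distinct and share an endpoint. -/
def lineGraphAdjMatrix {V : Type*} (G : SimpleGraph V) [Fintype G.edgeSet] :
    Matrix G.edgeSet G.edgeSet ℝ :=
  fun e f => if (G.lineGraph).Adj e f then 1 else 0

/-!
Let `N` be the vertex-edge incidence matrix of a graph with degree matrix `D` and adjacency matrix
`A`. Then `N * Nᵀ = D + A`, while `Nᵀ * N - 2` is the adjacency matrix of the line graph. Since
`N * Nᵀ` and `Nᵀ * N` have the same characteristic polynomial up to a power of `X`, the spectrum of
the line graph of a `d`-regular graph is the spectrum of `A` shifted by `d - 2`, together with extra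
eigenvalues `-2`. For the complete graph, `A = J - 1` with `J` the all-ones matrix of rank one.
-/

theorem lineGraph_adj_iff_existsUnique {V : Type*} {G : SimpleGraph V} {e f : G.edgeSet}
    (hef : e ≠ f) :
    G.lineGraph.Adj e f ↔ ∃! v, v ∈ (e : Sym2 V) ∧ v ∈ (f : Sym2 V) := by
  rw [SimpleGraph.lineGraph_adj_iff_exists, and_iff_right hef]
  refine ⟨fun ⟨v, hve, hvf⟩ => ⟨v, ⟨hve, hvf⟩, fun w ⟨hwe, hwf⟩ => ?_⟩, ExistsUnique.exists⟩
  by_contra hwv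
  exact hef (Subtype.ext (Sym2.eq_of_ne_mem hwv hwe hve hwf hvf))

section Incidence

variable {V : Type*} [DecidableEq V] (G : SimpleGraph V) [DecidableRel G.Adj] (R : Type*)

/-- The incidence matrix of `G` with one column per edge of `G`. Mathlib's `SimpleGraph.incMatrix`
has a column for every unordered pair of vertices; the columns of non-edges, which are zero, would
add spurious eigenvalues `0` to the product of the transpose with the matrix. -/
def edgeIncMatrix [Zero R] [One R] : Matrix V G.edgeSet R :=
  (G.incMatrix R).submatrix id Subtype.val

variable {R}

theorem edgeIncMatrix_apply [Zero R] [One R] (v : V) (e : G.edgeSet) :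
    edgeIncMatrix G R v e = if v ∈ (e : Sym2 V) then 1 else 0 := by
  simp [edgeIncMatrix, SimpleGraph.incMatrix_apply', SimpleGraph.incidenceSet]

theorem edgeIncMatrix_mul_transpose [Fintype V] [Fintype G.edgeSet] [Semiring R] :
    edgeIncMatrix G R * (edgeIncMatrix G R)ᵀ = G.degMatrix R + G.adjMatrix R := by
  have drop_nonedges : edgeIncMatrix G R * (edgeIncMatrix G R)ᵀ
      = G.incMatrix R * (G.incMatrix R)ᵀ := by
    ext v w
    refine Fintype.sum_of_injective Subtype.val Subtype.val_injective _ _ (fun e he_nonedge => ?_)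
      fun _ => rfl
    have he : e ∉ G.incidenceSet v := fun hev => he_nonedge ⟨⟨e, hev.1⟩, rfl⟩
    exact mul_eq_zero_of_left (G.incMatrix_of_notMem_incidenceSet he) _
  rw [drop_nonedges, SimpleGraph.incMatrix_mul_transpose]
  ext v w
  rcases eq_or_ne v w with rfl | hvw
  · simp [SimpleGraph.degMatrix]
  · simp [SimpleGraph.degMatrix, hvw, SimpleGraph.adjMatrix_apply]

theorem edgeIncMatrix_transpose_mul_apply_self [Fintype V] [NonAssocSemiring R] (e : G.edgeSet) :
    ((edgeIncMatrix G R)ᵀ * edgeIncMatrix G R) e e = 2 := by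
  have hdiag := G.incMatrix_transpose_mul_diag (R := R) (e := (e : Sym2 V))
  rwa [if_pos e.2] at hdiag

theorem edgeIncMatrix_transpose_mul_apply_of_ne [Fintype V] [NonAssocSemiring R]
    [DecidableRel G.lineGraph.Adj] {e f : G.edgeSet} (hef : e ≠ f) :
    ((edgeIncMatrix G R)ᵀ * edgeIncMatrix G R) e f = G.lineGraph.adjMatrix R e f := by
  simp only [mul_apply, transpose_apply, edgeIncMatrix_apply, ite_zero_mul_ite_zero, one_mul,
    SimpleGraph.adjMatrix_apply]
  split_ifs with hadj
  · obtain ⟨v, hv, hunique⟩ := (lineGraph_adj_iff_existsUnique hef).mp hadj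
    rw [Fintype.sum_eq_single v fun w hwv => if_neg (mt (hunique w) hwv), if_pos hv]
  · refine Finset.sum_eq_zero fun v _ => if_neg fun hv => hadj ?_
    exact SimpleGraph.lineGraph_adj_iff_exists.mpr ⟨hef, v, hv⟩

theorem lineGraph_adjMatrix_eq_transpose_mul_sub_scalar [Fintype V] [Fintype G.edgeSet] [Ring R]
    [DecidableRel G.lineGraph.Adj] :
    G.lineGraph.adjMatrix R = (edgeIncMatrix G R)ᵀ * edgeIncMatrix G R - scalar _ 2 := by
  ext e f
  rcases eq_or_ne e f with rfl | hef
  · simp [edgeIncMatrix_transpose_mul_apply_self]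
  · simp [edgeIncMatrix_transpose_mul_apply_of_ne G hef, hef]

end Incidence

section Charpoly

variable {V R : Type*} [Fintype V] [DecidableEq V] [CommRing R]

theorem charpoly_lineGraph_adjMatrix_of_card_le (G : SimpleGraph V) [DecidableRel G.Adj]
    [Fintype G.edgeSet] [DecidableRel G.lineGraph.Adj]
    (hle : Fintype.card V ≤ Fintype.card G.edgeSet) :
    (G.lineGraph.adjMatrix R).charpoly
      = (X + C 2) ^ (Fintype.card G.edgeSet - Fintype.card V)
        * (G.degMatrix R + G.adjMatrix R).charpoly.comp (X + C 2) := by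
  rw [lineGraph_adjMatrix_eq_transpose_mul_sub_scalar, charpoly_sub_scalar,
    charpoly_mul_comm_of_le _ _ hle, edgeIncMatrix_mul_transpose, mul_comp, X_pow_comp]

theorem charpoly_lineGraph_adjMatrix_of_isRegularOfDegree {G : SimpleGraph V} [DecidableRel G.Adj]
    [Fintype G.edgeSet] [DecidableRel G.lineGraph.Adj] {d : ℕ} (hd : G.IsRegularOfDegree d)
    (hle : Fintype.card V ≤ Fintype.card G.edgeSet) :
    (G.lineGraph.adjMatrix R).charpoly
      = (X + C 2) ^ (Fintype.card G.edgeSet - Fintype.card V)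
        * (G.adjMatrix R).charpoly.comp (X + C (2 - (d : R))) := by
  have degMatrix_add : G.degMatrix R + G.adjMatrix R = G.adjMatrix R - scalar V (-(d : R)) := by
    simp [SimpleGraph.degMatrix, hd.degree_eq, add_comm, sub_eq_add_neg]
  rw [charpoly_lineGraph_adjMatrix_of_card_le G hle, degMatrix_add, charpoly_sub_scalar, comp_assoc]
  simp [sub_eq_add_neg, add_assoc]

theorem charpoly_adjMatrix_top [Nonempty V] :
    ((⊤ : SimpleGraph V).adjMatrix R).charpoly
      = (X - C ((Fintype.card V : R) - 1)) * (X + C 1) ^ (Fintype.card V - 1) := by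
  have eq_rank_one_sub : (⊤ : SimpleGraph V).adjMatrix R = vecMulVec 1 1 - scalar V 1 := by
    ext v w
    rcases eq_or_ne v w with rfl | hvw <;> simp [*]
  obtain ⟨k, hk⟩ := Nat.exists_eq_add_one.mpr (Fintype.card_pos (α := V))
  rw [eq_rank_one_sub, charpoly_sub_scalar, charpoly_vecMulVec, one_dotProduct_one, hk,
    sub_comp, smul_comp, X_pow_comp, X_pow_comp]
  simp only [smul_eq_C_mul, Nat.cast_add_one, add_sub_cancel_right, Nat.add_sub_cancel, C_add, C_1]
  ring

end Charpoly

theorem lineGraphAdjMatrix_eq_adjMatrix {V : Type*} (G : SimpleGraph V) [Fintype G.edgeSet]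
    [DecidableRel G.lineGraph.Adj] : lineGraphAdjMatrix G = G.lineGraph.adjMatrix ℝ := by
  ext e f
  simp [lineGraphAdjMatrix, SimpleGraph.adjMatrix_apply]

theorem self_le_choose_two {n : ℕ} (hn : 3 ≤ n) : n ≤ n.choose 2 := by
  rw [Nat.choose_two_right, Nat.le_div_iff_mul_le two_pos]
  exact Nat.mul_le_mul_left n (by lia)

theorem lineGraph_complete_charpoly_general {V R : Type*} [Fintype V] [DecidableEq V] [CommRing R]
    [DecidableRel (⊤ : SimpleGraph V).lineGraph.Adj] (hV : 3 ≤ Fintype.card V) :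
    ((⊤ : SimpleGraph V).lineGraph.adjMatrix R).charpoly
      = (X - C (2 * (Fintype.card V : R) - 4))
          * (X - C ((Fintype.card V : R) - 4)) ^ (Fintype.card V - 1)
          * (X + C 2) ^ ((Fintype.card V).choose 2 - Fintype.card V) := by
  have card_edges : Fintype.card (⊤ : SimpleGraph V).edgeSet = (Fintype.card V).choose 2 := by
    rw [← SimpleGraph.edgeFinset_card, SimpleGraph.card_edgeFinset_top_eq_card_choose_two]
  have : Nonempty V := Fintype.card_pos_iff.mp (by lia)
  rw [charpoly_lineGraph_adjMatrix_of_isRegularOfDegree SimpleGraph.IsRegularOfDegree.top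
      (card_edges ▸ self_le_choose_two hV),
    charpoly_adjMatrix_top, card_edges, Nat.cast_pred Fintype.card_pos]
  simp only [mul_comp, sub_comp, add_comp, pow_comp, X_comp, C_comp]
  simp only [C_sub, C_mul, C_1, C_ofNat]
  ring

/-- For `n ≥ 3`, the characteristic polynomial of the adjacency matrix of the
line graph of the complete graph `K_n` is
`(X − (2n−4)) · (X − (n−4))^{n−1} · (X + 2)^{C(n,2)−n}`; that is, its eigenvalues are `2n−4`
(simple), `n−4` with multiplicity `n−1`, and `−2` with multiplicity `C(n,2)−n`. -/
theorem lineGraph_complete_charpoly {n : ℕ} (hn : 3 ≤ n) :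
    (lineGraphAdjMatrix (⊤ : SimpleGraph (Fin n))).charpoly
      = (X - C (2 * (n : ℝ) - 4)) * (X - C ((n : ℝ) - 4)) ^ (n - 1)
          * (X + C 2) ^ (n.choose 2 - n) := by
  simpa only [lineGraphAdjMatrix_eq_adjMatrix, Fintype.card_fin] using
    lineGraph_complete_charpoly_general (V := Fin n) (R := ℝ) (by rwa [Fintype.card_fin])
end
end

section
/- Let n ≥ 3 and let [n] be partitioned into clusters C_1,…,C_k with |C_r| = n_r ≥ 2. Let Q be the associated block-indicator matrix, M = Qᵀ A(L(K_n)) Q, and let V ∈ M_{C(n,2), C(n,2)−C(k+1,2)}(ℝ) be any matrix such that [Q, V] is an orthogonal matrix. Then, with L = Vᵀ A(L(K_n)) V, one has A(L(K_n)) = Q M Qᵀ + V L Vᵀ, and charpoly(L) = (X − (n−4))^{n−k} · (X + 2)^{C(n,2) − n − C(k,2)}; that is, the eigenvalues of L are n−4 with multiplicity n−k and −2 with multiplicity C(n,2) − n − C(k,2). -/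
open scoped Classical
open Matrix

noncomputable section

/-- The edges of the complete graph `K_n`: unordered pairs of distinct elements of `Fin n`. -/
def CompleteEdge (n : ℕ) : Type := {e : Sym2 (Fin n) // ¬ e.IsDiag}

instance (n : ℕ) : Fintype (CompleteEdge n) := Subtype.fintype _
instance (n : ℕ) : DecidableEq (CompleteEdge n) := Subtype.instDecidableEq

/-- The adjacency matrix of the line graph of the complete graph `K_n`: rows and columns are
indexed by the edges of `K_n`, with entry `1` exactly when the two edges are distinct and share
an endpoint. -/
def ALK (n : ℕ) : Matrix (CompleteEdge n) (CompleteEdge n) ℝ :=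
  fun e f => if e ≠ f ∧ ∃ v, v ∈ e.1 ∧ v ∈ f.1 then 1 else 0

variable {n k : ℕ}

/-- The block of the induced edge partition to which an edge belongs: the unordered pair of
clusters of its two endpoints. Blocks are indexed by `Sym2 (Fin k)`, which has
cardinality `C(k+1,2)`. -/
def blkOf (c : Fin n → Fin k) (e : CompleteEdge n) : Sym2 (Fin k) := Sym2.map c e.1

/-- The size `m_{r,s}` of a block of the induced edge partition. -/
def blkSize (c : Fin n → Fin k) (b : Sym2 (Fin k)) : ℕ :=
  (Finset.univ.filter (fun e : CompleteEdge n => blkOf c e = b)).card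

/-- The block-indicator matrix `Q` of the induced edge partition:
`Q_{e,(r,s)} = m_{r,s}^{-1/2}` if `e ∈ C_{(r,s)}` and `0` otherwise. -/
def Qmat (c : Fin n → Fin k) : Matrix (CompleteEdge n) (Sym2 (Fin k)) ℝ :=
  fun e b => if blkOf c e = b then 1 / Real.sqrt (blkSize c b) else 0

/-- `M = Qᵀ A(L(K_n)) Q`. -/
def Mmat (c : Fin n → Fin k) : Matrix (Sym2 (Fin k)) (Sym2 (Fin k)) ℝ :=
  (Qmat c)ᵀ * ALK n * Qmat c

/-- The size of the cluster `C_r`. -/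
def clusterSize (c : Fin n → Fin k) (r : Fin k) : ℕ :=
  (Finset.univ.filter (fun i => c i = r)).card

/-!
Let `B` be the vertex-edge incidence matrix of `K_n`, so that `A(L(K_n)) = Bᵀ B - 2`, and let `P`
and `Q Qᵀ` be the orthogonal projections onto the vectors that are constant on the clusters and on
the edge blocks. Both `B` and `Bᵀ` send vectors that are constant on classes to vectors that are
constant on classes, so `B (Q Qᵀ) = P B`. Hence `A(L(K_n))` commutes with `Q Qᵀ`, which gives the
decomposition. Moreover `N = B V` satisfies
`N Nᵀ = B (1 - Q Qᵀ) Bᵀ = (1 - P) B Bᵀ = (1 - P) ((n - 2) + J) = (n - 2) (1 - P)`,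
since `P` fixes the all-ones matrix `J`. As `Nᵀ N` and `N Nᵀ` have the same nonzero spectrum and
`1 - P` is a projection of rank `n - k`, this determines the spectrum of `L = Nᵀ N - 2`.
-/

lemma eq_compression_add_compression_of_commute {R : Type*} [Ring R] {p a : R}
    (hp : IsIdempotentElem p) (h : Commute p a) : a = p * a * p + (1 - p) * a * (1 - p) := by
  have compression_eq : p * a * p = a * p := by rw [h.eq, mul_assoc, hp.eq]
  have compression_one_sub_eq : (1 - p) * a * (1 - p) = a * (1 - p) := by
    rw [((Commute.one_left a).sub_left h).eq, mul_assoc, hp.one_sub.eq]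
  rw [compression_eq, compression_one_sub_eq, ← mul_add, add_sub_cancel, mul_one]

section Charpoly

open Polynomial

variable {R m κ ι : Type*} [CommRing R] [Fintype m] [DecidableEq m] [Fintype κ] [DecidableEq κ]
  [Fintype ι] [DecidableEq ι]

lemma charpoly_smul_one (μ : R) :
    (μ • (1 : Matrix m m R)).charpoly = (X - C μ) ^ Fintype.card m := by
  simp [smul_one_eq_diagonal, charpoly_diagonal]

lemma charpoly_sub_smul_one (M : Matrix m m R) (μ : R) :
    (M - μ • 1).charpoly = M.charpoly.comp (X + C μ) := by
  rw [smul_one_eq_diagonal, ← scalar_apply, charpoly_sub_scalar]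

lemma charpoly_smul_one_sub_mul_transpose {S : Matrix m κ R} (hS : Sᵀ * S = 1) (α : R) :
    (X - C α) ^ Fintype.card κ * (α • (1 - S * Sᵀ)).charpoly =
      (X - C α) ^ Fintype.card m * X ^ Fintype.card κ := by
  have charpoly_comm : X ^ Fintype.card κ * ((-α) • S * Sᵀ).charpoly =
      X ^ Fintype.card m * (X + C α) ^ Fintype.card κ := by
    rw [charpoly_mul_comm', Matrix.mul_smul, hS, charpoly_smul_one, C_neg, sub_neg_eq_add]
  have shift : α • (1 - S * Sᵀ) = (-α) • S * Sᵀ - (-α) • (1 : Matrix m m R) := by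
    rw [smul_mul, smul_sub, neg_smul, neg_smul]
    abel
  have shifted_comm := congrArg (fun p : R[X] => p.comp (X - C α)) charpoly_comm
  simp only [mul_comp, pow_comp, X_comp, add_comp, C_comp, sub_add_cancel] at shifted_comm
  rw [shift, charpoly_sub_smul_one, C_neg, ← sub_eq_add_neg, shifted_comm]

lemma charpoly_transpose_mul_self [IsDomain R] {N : Matrix m ι R} {S : Matrix m κ R} {α : R}
    (hS : Sᵀ * S = 1) (hN : N * Nᵀ = α • (1 - S * Sᵀ)) {d l : ℕ}
    (hm : Fintype.card m = Fintype.card κ + l) (hι : Fintype.card ι = d + l) :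
    (Nᵀ * N).charpoly = (X - C α) ^ l * X ^ d := by
  have charpoly_comm := charpoly_mul_comm' Nᵀ N
  rw [hN] at charpoly_comm
  have factor_ne_zero : X ^ Fintype.card m * (X - C α) ^ Fintype.card κ ≠ 0 :=
    mul_ne_zero (pow_ne_zero _ X_ne_zero) (pow_ne_zero _ (X_sub_C_ne_zero α))
  refine mul_left_cancel₀ factor_ne_zero ?_
  calc X ^ Fintype.card m * (X - C α) ^ Fintype.card κ * (Nᵀ * N).charpoly
      = X ^ Fintype.card ι * ((X - C α) ^ Fintype.card κ * (α • (1 - S * Sᵀ)).charpoly) := by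
        rw [mul_right_comm, charpoly_comm]; ring
    _ = X ^ Fintype.card m * (X - C α) ^ Fintype.card κ * ((X - C α) ^ l * X ^ d) := by
        rw [charpoly_smul_one_sub_mul_transpose hS, hm, hι]; ring

end Charpoly

section FiberAverage

variable {α β : Type*} [Fintype α] [DecidableEq β]

/-- The matrix whose column at `b` is the indicator vector of the fiber of `f` over `b`, scaled to
Euclidean length one; the column of an empty fiber is zero. For `f = blkOf c` it is, by
definition, the matrix `Q`. -/
def fiberIndicator (f : α → β) : Matrix α β ℝ :=
  fun a b => if f a = b then 1 / Real.sqrt (Finset.univ.filter (fun x => f x = b)).card else 0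

lemma fiberIndicator_transpose_mul_self {f : α → β} (hf : f.Surjective) :
    (fiberIndicator f)ᵀ * fiberIndicator f = 1 := by
  ext b b'
  rcases eq_or_ne b b' with rfl | hne
  · obtain ⟨a, ha⟩ := hf b
    have card_ne_zero : ((Finset.univ.filter (fun x => f x = b)).card : ℝ) ≠ 0 :=
      Nat.cast_ne_zero.mpr (Finset.card_ne_zero_of_mem (by simpa using ha))
    simp [mul_apply, fiberIndicator, ← ite_and, Finset.sum_ite, ← mul_inv, card_ne_zero]
  · rw [one_apply_ne hne, mul_apply]
    refine Finset.sum_eq_zero fun a _ => ?_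
    rcases eq_or_ne (f a) b with ha | ha <;> simp [fiberIndicator, ha, hne]

variable [Fintype β]

/-- The orthogonal projection onto the vectors that are constant on the fibers of `f`, as a matrix.
It replaces each entry of a vector by the average over the fiber, and encodes both the projection
onto cluster-constant vertex vectors and the one onto block-constant edge vectors. -/
def fiberAverage (f : α → β) : Matrix α α ℝ :=
  fiberIndicator f * (fiberIndicator f)ᵀ

lemma fiberAverage_transpose (f : α → β) : (fiberAverage f)ᵀ = fiberAverage f := by
  rw [fiberAverage, transpose_mul, transpose_transpose]

open scoped BigOperators in
lemma fiberAverage_mulVec_apply (f : α → β) (w : α → ℝ) (a : α) :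
    (fiberAverage f *ᵥ w) a = 𝔼 a' with f a' = f a, w a' := by
  simp only [mulVec, dotProduct, Finset.expect_eq_sum_div_card, Finset.sum_div, Finset.sum_filter]
  refine Finset.sum_congr rfl fun a' _ => ?_
  rcases eq_or_ne (f a') (f a) with h | h
  · simp [fiberAverage, fiberIndicator, mul_apply, h, ← mul_inv, div_eq_inv_mul]
  · simp [fiberAverage, fiberIndicator, mul_apply, h, h.symm]

lemma factorsThrough_fiberAverage_mulVec (f : α → β) (w : α → ℝ) :
    (fiberAverage f *ᵥ w).FactorsThrough f := by
  intro a a' h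
  simp only [fiberAverage_mulVec_apply, h]

lemma fiberAverage_mulVec_of_factorsThrough {f : α → β} {w : α → ℝ} (hw : w.FactorsThrough f) :
    fiberAverage f *ᵥ w = w := by
  ext a
  have fiber_nonempty : (Finset.univ.filter (fun a' => f a' = f a)).Nonempty := ⟨a, by simp⟩
  rw [fiberAverage_mulVec_apply,
    Finset.expect_congr rfl fun a' ha' => hw (Finset.mem_filter.mp ha').2,
    Finset.expect_const fiber_nonempty]

lemma isIdempotentElem_fiberAverage (f : α → β) : IsIdempotentElem (fiberAverage f) :=
  mulVec_injective <| funext fun w => by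
    rw [← mulVec_mulVec,
      fiberAverage_mulVec_of_factorsThrough (factorsThrough_fiberAverage_mulVec f w)]

lemma fiberAverage_mul_mul_fiberAverage {γ δ : Type*} [Fintype γ] [Fintype δ] [DecidableEq δ]
    {f : α → β} {g : γ → δ} {A : Matrix α γ ℝ}
    (hA : ∀ w : γ → ℝ, w.FactorsThrough g → (A *ᵥ w).FactorsThrough f) :
    fiberAverage f * (A * fiberAverage g) = A * fiberAverage g :=
  mulVec_injective <| funext fun w => by
    simp only [← mulVec_mulVec]
    exact fiberAverage_mulVec_of_factorsThrough (hA _ (factorsThrough_fiberAverage_mulVec g w))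

lemma mul_fiberAverage_eq_fiberAverage_mul {γ δ : Type*} [Fintype γ] [Fintype δ] [DecidableEq δ]
    {f : α → β} {g : γ → δ} {A : Matrix α γ ℝ}
    (hA : ∀ w : γ → ℝ, w.FactorsThrough g → (A *ᵥ w).FactorsThrough f)
    (hAT : ∀ u : α → ℝ, u.FactorsThrough f → (Aᵀ *ᵥ u).FactorsThrough g) :
    A * fiberAverage g = fiberAverage f * A := by
  have transposed := congrArg transpose (fiberAverage_mul_mul_fiberAverage hAT)
  simp only [transpose_mul, transpose_transpose, fiberAverage_transpose] at transposed
  rw [← fiberAverage_mul_mul_fiberAverage hA, ← Matrix.mul_assoc, transposed]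

end FiberAverage

section Incidence

/-- The vertex-edge incidence matrix of `K_n`. Its columns are indexed by the edges only, unlike
those of `SimpleGraph.incMatrix`, which are indexed by all unordered pairs. -/
def edgeIncidence (n : ℕ) : Matrix (Fin n) (CompleteEdge n) ℝ :=
  ((⊤ : SimpleGraph (Fin n)).incMatrix ℝ).submatrix id fun e => e.1

lemma edgeIncidence_apply (v : Fin n) (e : CompleteEdge n) :
    edgeIncidence n v e = if v ∈ e.1 then 1 else 0 := by
  simp [edgeIncidence, SimpleGraph.incMatrix_apply', SimpleGraph.incidenceSet, e.2]

lemma edgeIncidence_mul_transpose_eq_incMatrix_mul_transpose (n : ℕ) :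
    edgeIncidence n * (edgeIncidence n)ᵀ =
      (⊤ : SimpleGraph (Fin n)).incMatrix ℝ * ((⊤ : SimpleGraph (Fin n)).incMatrix ℝ)ᵀ := by
  ext i j
  rw [mul_apply, mul_apply]
  refine Fintype.sum_of_injective (fun e : CompleteEdge n => e.1) Subtype.val_injective _ _
    (fun e he => ?_) fun e => rfl
  rw [SimpleGraph.incMatrix_of_notMem_incidenceSet, zero_mul]
  exact fun hmem => he ⟨⟨e, SimpleGraph.not_isDiag_of_mem_edgeSet _ hmem.1⟩, rfl⟩

lemma edgeIncidence_mul_transpose (n : ℕ) :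
    edgeIncidence n * (edgeIncidence n)ᵀ = ((n : ℝ) - 2) • 1 + vecMulVec 1 1 := by
  rw [edgeIncidence_mul_transpose_eq_incMatrix_mul_transpose, SimpleGraph.incMatrix_mul_transpose]
  ext i j
  rcases eq_or_ne i j with rfl | hij
  · suffices (n : ℝ) - 1 = n - 2 + 1 by simpa [Nat.cast_sub (i.pos : 1 ≤ n)] using this
    ring
  · simp [hij]

lemma edgeIncidence_transpose_mulVec_apply (u : Fin n → ℝ) (e : CompleteEdge n) :
    ((edgeIncidence n)ᵀ *ᵥ u) e = ∑ v ∈ e.1.toFinset, u v := by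
  simp only [mulVec, dotProduct, transpose_apply, edgeIncidence_apply, ite_mul, one_mul, zero_mul,
    ← Sym2.mem_toFinset, Finset.sum_ite_mem, Finset.univ_inter]

lemma edgeIncidence_transpose_mulVec_apply_of_eq (u : Fin n → ℝ) {e : CompleteEdge n}
    {a b : Fin n} (he : e.1 = s(a, b)) : ((edgeIncidence n)ᵀ *ᵥ u) e = u a + u b := by
  have hab : a ≠ b := by simpa [he] using e.2
  rw [edgeIncidence_transpose_mulVec_apply, he, Sym2.toFinset_mk_eq, Finset.sum_pair hab]

lemma edgeIncidence_transpose_mul_self_apply (e f : CompleteEdge n) :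
    ((edgeIncidence n)ᵀ * edgeIncidence n) e f = (e.1.toFinset ∩ f.1.toFinset).card := by
  calc ((edgeIncidence n)ᵀ * edgeIncidence n) e f
      = ((edgeIncidence n)ᵀ *ᵥ fun v => edgeIncidence n v f) e := rfl
    _ = ∑ v ∈ e.1.toFinset, edgeIncidence n v f := edgeIncidence_transpose_mulVec_apply _ e
    _ = (e.1.toFinset ∩ f.1.toFinset).card := by
        simp [edgeIncidence_apply, ← Sym2.mem_toFinset]

lemma card_toFinset_inter_toFinset_le_one {α : Type*} [DecidableEq α] {e f : Sym2 α}
    (h : e ≠ f) : (e.toFinset ∩ f.toFinset).card ≤ 1 := by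
  refine Finset.card_le_one.mpr fun u hu v hv => ?_
  simp only [Finset.mem_inter, Sym2.mem_toFinset] at hu hv
  by_contra huv
  exact h (Sym2.eq_of_ne_mem huv hu.1 hv.1 hu.2 hv.2)

lemma card_toFinset_inter_toFinset {α : Type*} [DecidableEq α] {e f : Sym2 α} (h : e ≠ f) :
    (e.toFinset ∩ f.toFinset).card = if ∃ v, v ∈ e ∧ v ∈ f then 1 else 0 := by
  have card_pos_iff : 0 < (e.toFinset ∩ f.toFinset).card ↔ ∃ v, v ∈ e ∧ v ∈ f := by
    simp [Finset.card_pos, Finset.Nonempty]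
  split_ifs with hshare
  · exact le_antisymm (card_toFinset_inter_toFinset_le_one h) (card_pos_iff.mpr hshare)
  · exact Nat.eq_zero_of_not_pos (card_pos_iff.not.mpr hshare)

lemma ALK_eq_transpose_mul_self_sub (n : ℕ) :
    ALK n = (edgeIncidence n)ᵀ * edgeIncidence n - (2 : ℝ) • 1 := by
  ext e f
  rw [Matrix.sub_apply, edgeIncidence_transpose_mul_self_apply, Matrix.smul_apply]
  rcases eq_or_ne e f with rfl | hef
  · simp [ALK, Sym2.card_toFinset_of_not_isDiag _ e.2]
  · simp [ALK, hef, card_toFinset_inter_toFinset (Subtype.coe_injective.ne hef)]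

end Incidence

section Partition

lemma comp_swap_eq_self {α β : Type*} [DecidableEq α] {f : α → β} {a b : α} (h : f a = f b) :
    f ∘ Equiv.swap a b = f := by
  rw [Equiv.comp_swap_eq_update, h, Function.update_eq_self, ← h, Function.update_eq_self]

/-- The action of a permutation of the vertices of `K_n` on its edges. Transpositions inside a
cluster act this way as symmetries of the edge partition. -/
def edgePerm (σ : Equiv.Perm (Fin n)) : Equiv.Perm (CompleteEdge n) where
  toFun e := ⟨e.1.map σ, (Sym2.isDiag_map σ.injective).not.mpr e.2⟩
  invFun e := ⟨e.1.map σ.symm, (Sym2.isDiag_map σ.symm.injective).not.mpr e.2⟩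
  left_inv e := Subtype.ext (by simp [Sym2.map_map])
  right_inv e := Subtype.ext (by simp [Sym2.map_map])

lemma val_edgePerm (σ : Equiv.Perm (Fin n)) (e : CompleteEdge n) :
    (edgePerm σ e).1 = e.1.map σ := rfl

lemma edgeIncidence_edgePerm (σ : Equiv.Perm (Fin n)) (v : Fin n) (e : CompleteEdge n) :
    edgeIncidence n (σ v) (edgePerm σ e) = edgeIncidence n v e := by
  simp [edgeIncidence_apply, val_edgePerm, Sym2.mem_map]

variable {c : Fin n → Fin k}

lemma blkOf_edgePerm {σ : Equiv.Perm (Fin n)} (hσ : c ∘ σ = c) (e : CompleteEdge n) :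
    blkOf c (edgePerm σ e) = blkOf c e := by
  rw [blkOf, blkOf, val_edgePerm, Sym2.map_map, hσ]

lemma factorsThrough_edgeIncidence_mulVec {w : CompleteEdge n → ℝ}
    (hw : w.FactorsThrough (blkOf c)) : (edgeIncidence n *ᵥ w).FactorsThrough c := by
  intro i j hij
  simp only [mulVec, dotProduct]
  refine Fintype.sum_equiv (edgePerm (Equiv.swap i j)) _ _ fun e => ?_
  have incidence_eq := edgeIncidence_edgePerm (Equiv.swap i j) i e
  rw [Equiv.swap_apply_left] at incidence_eq
  rw [hw (blkOf_edgePerm (comp_swap_eq_self hij) e), incidence_eq]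

lemma factorsThrough_edgeIncidence_transpose_mulVec {u : Fin n → ℝ}
    (hu : u.FactorsThrough c) : ((edgeIncidence n)ᵀ *ᵥ u).FactorsThrough (blkOf c) := by
  intro e f hef
  obtain ⟨a, b, he⟩ := Sym2.exists.mp ⟨e.1, rfl⟩
  obtain ⟨a', b', hf⟩ := Sym2.exists.mp ⟨f.1, rfl⟩
  rw [edgeIncidence_transpose_mulVec_apply_of_eq u he,
    edgeIncidence_transpose_mulVec_apply_of_eq u hf]
  simp only [blkOf, he, hf, Sym2.map_mk, Sym2.eq_iff] at hef
  rcases hef with ⟨ha, hb⟩ | ⟨ha, hb⟩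
  · rw [hu ha, hu hb]
  · rw [hu ha, hu hb, add_comm]

variable (c)

lemma edgeIncidence_mul_fiberAverage_blkOf :
    edgeIncidence n * fiberAverage (blkOf c) = fiberAverage c * edgeIncidence n :=
  mul_fiberAverage_eq_fiberAverage_mul (fun _ => factorsThrough_edgeIncidence_mulVec)
    fun _ => factorsThrough_edgeIncidence_transpose_mulVec

lemma commute_fiberAverage_blkOf_ALK : Commute (fiberAverage (blkOf c)) (ALK n) := by
  have intertwine := edgeIncidence_mul_fiberAverage_blkOf c
  have intertwine_transpose := congrArg transpose intertwine
  simp only [transpose_mul, fiberAverage_transpose] at intertwine_transpose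
  have commute_gram :
      Commute (fiberAverage (blkOf c)) ((edgeIncidence n)ᵀ * edgeIncidence n) := by
    rw [Commute, SemiconjBy, ← Matrix.mul_assoc, intertwine_transpose, Matrix.mul_assoc,
      ← intertwine, Matrix.mul_assoc]
  rw [ALK_eq_transpose_mul_self_sub]
  exact commute_gram.sub_right ((Commute.one_right _).smul_right 2)

lemma one_sub_fiberAverage_mul_edgeIncidence_mul_transpose :
    (1 - fiberAverage c) * (edgeIncidence n * (edgeIncidence n)ᵀ) =
      ((n : ℝ) - 2) • (1 - fiberAverage c) := by
  have fixes_ones : fiberAverage c *ᵥ 1 = 1 :=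
    fiberAverage_mulVec_of_factorsThrough fun _ _ _ => rfl
  have kills_all_ones : (1 - fiberAverage c) * vecMulVec 1 (1 : Fin n → ℝ) = 0 := by
    rw [mul_vecMulVec, sub_mulVec, one_mulVec, fixes_ones, sub_self, zero_vecMulVec]
  rw [edgeIncidence_mul_transpose, Matrix.mul_add, kills_all_ones, add_zero, Matrix.mul_smul,
    Matrix.mul_one]

end Partition

section Complement

variable {ι : Type*} {c : Fin n → Fin k} {V : Matrix (CompleteEdge n) ι ℝ}

lemma transpose_mul_ALK_mul_eq [DecidableEq ι] (hVV : Vᵀ * V = 1) :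
    Vᵀ * ALK n * V = (edgeIncidence n * V)ᵀ * (edgeIncidence n * V) - (2 : ℝ) • 1 := by
  rw [ALK_eq_transpose_mul_self_sub, Matrix.mul_sub, Matrix.sub_mul, Matrix.mul_smul,
    Matrix.smul_mul, Matrix.mul_one, hVV, transpose_mul]
  simp only [Matrix.mul_assoc]

variable [Fintype ι]

lemma ALK_eq_compression_add_compression (hcomplete : Qmat c * (Qmat c)ᵀ + V * Vᵀ = 1) :
    ALK n = Qmat c * Mmat c * (Qmat c)ᵀ + V * (Vᵀ * ALK n * V) * Vᵀ := by
  have complement_eq : V * Vᵀ = 1 - fiberAverage (blkOf c) := eq_sub_of_add_eq' hcomplete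
  have block_eq : Qmat c * (Qmat c)ᵀ = fiberAverage (blkOf c) := rfl
  calc ALK n = fiberAverage (blkOf c) * ALK n * fiberAverage (blkOf c) +
        (1 - fiberAverage (blkOf c)) * ALK n * (1 - fiberAverage (blkOf c)) :=
        eq_compression_add_compression_of_commute (isIdempotentElem_fiberAverage _)
          (commute_fiberAverage_blkOf_ALK c)
    _ = Qmat c * Mmat c * (Qmat c)ᵀ + V * (Vᵀ * ALK n * V) * Vᵀ := by
        rw [← complement_eq, ← block_eq, Mmat]
        simp only [Matrix.mul_assoc]

lemma edgeIncidence_mul_complement_mul_transpose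
    (hcomplete : Qmat c * (Qmat c)ᵀ + V * Vᵀ = 1) :
    edgeIncidence n * V * (edgeIncidence n * V)ᵀ = ((n : ℝ) - 2) • (1 - fiberAverage c) := by
  have complement_eq : V * Vᵀ = 1 - fiberAverage (blkOf c) := eq_sub_of_add_eq' hcomplete
  have intertwine : edgeIncidence n * (1 - fiberAverage (blkOf c)) =
      (1 - fiberAverage c) * edgeIncidence n := by
    rw [Matrix.mul_sub, Matrix.sub_mul, Matrix.mul_one, Matrix.one_mul,
      edgeIncidence_mul_fiberAverage_blkOf]
  calc edgeIncidence n * V * (edgeIncidence n * V)ᵀ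
      = edgeIncidence n * (V * Vᵀ) * (edgeIncidence n)ᵀ := by
        simp only [transpose_mul, Matrix.mul_assoc]
    _ = (1 - fiberAverage c) * (edgeIncidence n * (edgeIncidence n)ᵀ) := by
        rw [complement_eq, intertwine, Matrix.mul_assoc]
    _ = ((n : ℝ) - 2) • (1 - fiberAverage c) :=
        one_sub_fiberAverage_mul_edgeIncidence_mul_transpose c

open Polynomial in
lemma charpoly_transpose_mul_ALK_mul [DecidableEq ι] (hc : c.Surjective)
    (hVV : Vᵀ * V = 1) (hcomplete : Qmat c * (Qmat c)ᵀ + V * Vᵀ = 1) {d : ℕ}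
    (hd : Fintype.card ι = d + (n - k)) :
    (Vᵀ * ALK n * V).charpoly = (X - C ((n : ℝ) - 4)) ^ (n - k) * (X + C 2) ^ d := by
  have hkn : k ≤ n := by simpa using Fintype.card_le_of_surjective c hc
  have charpoly_gram := charpoly_transpose_mul_self (fiberIndicator_transpose_mul_self hc)
    (edgeIncidence_mul_complement_mul_transpose hcomplete)
    (by simpa using (Nat.add_sub_of_le hkn).symm) hd
  have shift_root : (X : ℝ[X]) + C 2 - C ((n : ℝ) - 2) = X - C ((n : ℝ) - 4) := by
    rw [add_sub_assoc, ← C_sub, sub_eq_add_neg X, ← C_neg]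
    congr 2
    ring
  rw [transpose_mul_ALK_mul_eq hVV, charpoly_sub_smul_one, charpoly_gram, mul_comp, pow_comp,
    pow_comp, sub_comp, X_comp, C_comp, shift_root]

end Complement

section Counting

lemma surjective_of_two_le_clusterSize {c : Fin n → Fin k} (hsz : ∀ r, 2 ≤ clusterSize c r) :
    c.Surjective := by
  intro r
  obtain ⟨i, hi⟩ := Finset.card_pos.mp (zero_lt_two.trans_le (hsz r))
  exact ⟨i, (Finset.mem_filter.mp hi).2⟩

lemma two_mul_le_of_two_le_clusterSize {c : Fin n → Fin k} (hsz : ∀ r, 2 ≤ clusterSize c r) :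
    2 * k ≤ n := by
  by_contra! hlt
  obtain ⟨r, hr⟩ :=
    Fintype.exists_card_fiber_lt_of_card_lt_mul c (n := 2) (by simpa [mul_comm] using hlt)
  exact hr.not_ge (hsz r)

lemma add_choose_two_le_choose_two (hn : 3 ≤ n) (hk : k + 2 ≤ n) :
    n + k.choose 2 ≤ n.choose 2 := by
  obtain ⟨m, rfl⟩ : ∃ m, n = m + 2 := ⟨n - 2, by lia⟩
  have choose_mono : k.choose 2 ≤ m.choose 2 := Nat.choose_le_choose 2 (by lia)
  have pascal : (m + 2).choose 2 = (m + 1) + (m + m.choose 2) := by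
    rw [Nat.choose_succ_succ' (m + 1) 1, Nat.choose_succ_succ' m 1, Nat.choose_one_right,
      Nat.choose_one_right]
  lia

lemma choose_two_sub_succ_choose_two (hn : 3 ≤ n) (hk : k + 2 ≤ n) :
    n.choose 2 - (k + 1).choose 2 = (n.choose 2 - n - k.choose 2) + (n - k) := by
  have exponent_nonneg := add_choose_two_le_choose_two hn hk
  have pascal : (k + 1).choose 2 = k + k.choose 2 := by
    rw [Nat.choose_succ_succ' k 1, Nat.choose_one_right]
  lia

end Counting

open Polynomial in
theorem ALK_decomposition_and_L_charpoly_general {n k : ℕ} {ι : Type*} [Fintype ι]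
    [DecidableEq ι] (c : Fin n → Fin k) (hc : c.Surjective) (V : Matrix (CompleteEdge n) ι ℝ)
    (hVV : Vᵀ * V = 1) (hcomplete : Qmat c * (Qmat c)ᵀ + V * Vᵀ = 1)
    {d : ℕ} (hd : Fintype.card ι = d + (n - k)) :
    ALK n = Qmat c * Mmat c * (Qmat c)ᵀ + V * (Vᵀ * ALK n * V) * Vᵀ ∧
      (Vᵀ * ALK n * V).charpoly = (X - C ((n : ℝ) - 4)) ^ (n - k) * (X + C 2) ^ d :=
  ⟨ALK_eq_compression_add_compression hcomplete,
    charpoly_transpose_mul_ALK_mul hc hVV hcomplete hd⟩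

open Polynomial in
/-- Let `n ≥ 3` and let `[n]` be partitioned into clusters each of size at
least `2`, with block-indicator matrix `Q` and `M = Qᵀ A(L(K_n)) Q`.  If `V` is any matrix
making `[Q, V]` orthogonal (orthonormal columns completing those of `Q`), then with
`L = Vᵀ A(L(K_n)) V` one has `A(L(K_n)) = Q M Qᵀ + V L Vᵀ` and
`charpoly(L) = (X − (n−4))^{n−k} · (X + 2)^{C(n,2) − n − C(k,2)}`. -/
theorem ALK_decomposition_and_L_charpoly {n k : ℕ} (hn : 3 ≤ n) (c : Fin n → Fin k)
    (hsz : ∀ r, 2 ≤ clusterSize c r)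
    (V : Matrix (CompleteEdge n) (Fin (n.choose 2 - (k + 1).choose 2)) ℝ)
    (hVV : Vᵀ * V = 1) (hQV : (Qmat c)ᵀ * V = 0)
    (hcomplete : Qmat c * (Qmat c)ᵀ + V * Vᵀ = 1) :
    ALK n = Qmat c * Mmat c * (Qmat c)ᵀ + V * (Vᵀ * ALK n * V) * Vᵀ ∧
      (Vᵀ * ALK n * V).charpoly
        = (X - C ((n : ℝ) - 4)) ^ (n - k) * (X + C 2) ^ (n.choose 2 - n - k.choose 2) := by
  have two_mul_le := two_mul_le_of_two_le_clusterSize hsz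
  have hk : k + 2 ≤ n := by lia
  exact ALK_decomposition_and_L_charpoly_general c (surjective_of_two_le_clusterSize hsz) V hVV
    hcomplete (by rw [Fintype.card_fin, choose_two_sub_succ_choose_two hn hk])
end
end

section
/- Let n, m be nonnegative integers with m + n ≥ 3, p ∈ [0,1], let X ~ Binomial(n,p) and Y ~ Binomial(m,p) be independent, and let Z = X/√(X+Y), with the convention Z = 0 when X + Y = 0. Then, with T ~ Binomial(m+n, p), E[Z³] = (n/((m+n)(m+n−1)(m+n−2))) · E[ ((n−1)(n−2)·T² + 3m(n−1)·T + m(m−n)) · T^{−1/2} · 1_{T≥1} ]. -/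
open MeasureTheory ProbabilityTheory

noncomputable section

/-!
Write `x^(k)` for falling factorials, `T = X + Y` and `N = n + m`. Peeling `k` successes off `X`
gives `E[X^(k) g(X + Y)] = n^(k) p^k E[g(S + k)]` with `S ~ Bin(N - k, p)`, and the same identity
for `T` alone reads `E[T^(k) g(T)] = N^(k) p^k E[g(S + k)]`. Hence
`N^(k) E[X^(k) g(T)] = n^(k) E[T^(k) g(T)]` for every `g`. The third moment is the case
`g(t) = t^(-3/2)` with `x³ = x^(3) + 3 x^(2) + x^(1)`.
-/

section FactorialMoments

open Finset.HasAntidiagonal (antidiagonal mem_antidiagonal)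

variable {E : Type*} [NormedAddCommGroup E]

lemma integrable_binomial_prod_binomial (n m : ℕ) (p q : unitInterval) (f : ℕ × ℕ → E) :
    Integrable f (Bin(n, p).prod Bin(m, q)) :=
  (integrable_prod_iff .of_discrete).2
    ⟨.of_forall fun _ ↦ integrable_binomial _, integrable_binomial _⟩

variable [NormedSpace ℝ E] [CompleteSpace E]

lemma integral_binomial_eq_sum_Icc_one (n : ℕ) (p : unitInterval) {f : ℕ → E} (f_zero : f 0 = 0) :
    ∫ t, f t ∂Bin(n, p)
      = ∑ t ∈ Finset.Icc 1 n, (n.choose t * (p : ℝ) ^ t * (1 - p) ^ (n - t)) • f t := by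
  rw [integral_binomial]
  refine (Finset.sum_subset (fun t ht ↦ ?_) fun t _ ht ↦ ?_).symm
  · simp_all
  · obtain rfl : t = 0 := by simp_all
    rw [f_zero, smul_zero]

lemma integral_natCast_smul_binomial_succ (n : ℕ) (p : unitInterval) (f : ℕ → E) :
    ∫ x, (x : ℝ) • f x ∂Bin(n + 1, p) = ((n + 1 : ℝ) * p) • ∫ x, f (x + 1) ∂Bin(n, p) := by
  rw [integral_binomial, integral_binomial, ← Nat.range_succ_eq_Iic, Finset.sum_range_succ',
    ← Nat.range_succ_eq_Iic, Finset.smul_sum]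
  simp only [Nat.cast_zero, zero_smul, smul_zero, add_zero, smul_smul, Nat.add_sub_add_right]
  refine Finset.sum_congr rfl fun x _ ↦ ?_
  have choose_succ : ((n : ℝ) + 1) * n.choose x = (n + 1).choose (x + 1) * ((x : ℝ) + 1) := by
    exact_mod_cast Nat.add_one_mul_choose_eq n x
  congr 1
  push_cast
  linear_combination -(p : ℝ) ^ (x + 1) * (1 - p) ^ (n - x) * choose_succ

-- The truncated subtraction `n - k` is harmless: `n.descFactorial k = 0` when `n < k`.
lemma integral_descFactorial_smul_binomial (k n : ℕ) (p : unitInterval) (f : ℕ → E) :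
    ∫ x, (x.descFactorial k : ℝ) • f x ∂Bin(n, p)
      = ((n.descFactorial k : ℝ) * (p : ℝ) ^ k) • ∫ x, f (x + k) ∂Bin(n - k, p) := by
  induction k generalizing n f with
  | zero => simp
  | succ k ih =>
    cases n with
    | zero => simp [binomial_zero]
    | succ n =>
      have peel (x : ℕ) : (x.descFactorial (k + 1) : ℝ) • f x
          = (x : ℝ) • ((x - 1).descFactorial k : ℝ) • f x := by
        cases x with
        | zero => simp
        | succ x => simp only [Nat.succ_descFactorial_succ, Nat.cast_mul, mul_smul,
            Nat.add_sub_cancel]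
      simp_rw [peel]
      rw [integral_natCast_smul_binomial_succ]
      simp_rw [Nat.add_sub_cancel]
      rw [ih n fun x ↦ f (x + 1), smul_smul, Nat.add_sub_add_right, Nat.succ_descFactorial_succ]
      simp_rw [← add_assoc]
      congr 1
      push_cast
      ring

lemma binomial_real_singleton_mul_binomial_real_singleton (n m i j : ℕ) (p : unitInterval) :
    Bin(n, p).real {i} * Bin(m, p).real {j}
      = (n.choose i * m.choose j : ℕ) * ((p : ℝ) ^ (i + j) * (1 - p) ^ (n + m - (i + j))) := by
  rw [binomial_real_singleton, binomial_real_singleton]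
  rcases lt_or_ge n i with hi | hi
  · simp [Nat.choose_eq_zero_of_lt hi]
  rcases lt_or_ge m j with hj | hj
  · simp [Nat.choose_eq_zero_of_lt hj]
  rw [show n + m - (i + j) = (n - i) + (m - j) by lia]
  push_cast
  ring

lemma binomial_conv_binomial (n m : ℕ) (p : unitInterval) :
    Bin(n, p) ∗ Bin(m, p) = Bin(n + m, p) := by
  refine Measure.ext_of_measureReal_singleton fun t ↦ ?_
  have preimage_add : (fun z : ℕ × ℕ ↦ z.1 + z.2) ⁻¹' {t} = ↑(antidiagonal t) := by
    ext z
    simp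
  calc (Bin(n, p) ∗ Bin(m, p)).real {t}
      = ∑ z ∈ antidiagonal t, (Bin(n, p).prod Bin(m, p)).real {z} := by
        rw [Measure.conv, map_measureReal_apply .of_discrete (measurableSet_singleton t),
          preimage_add, sum_measureReal_singleton]
    _ = ∑ z ∈ antidiagonal t, (n.choose z.1 * m.choose z.2 : ℕ)
          * ((p : ℝ) ^ t * (1 - p) ^ (n + m - t)) := by
        refine Finset.sum_congr rfl fun ⟨i, j⟩ hz ↦ ?_
        rw [← Set.singleton_prod_singleton, measureReal_prod_prod,
          binomial_real_singleton_mul_binomial_real_singleton, mem_antidiagonal.1 hz]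
    _ = Bin(n + m, p).real {t} := by
        rw [← Finset.sum_mul, ← Nat.cast_sum, ← Nat.add_choose_eq, binomial_real_singleton,
          mul_assoc]

lemma integral_descFactorial_fst_smul_binomial_prod (k n m : ℕ) (p : unitInterval) (g : ℕ → E) :
    ∫ z, (z.1.descFactorial k : ℝ) • g (z.1 + z.2) ∂(Bin(n, p).prod Bin(m, p))
      = ((n.descFactorial k : ℝ) * (p : ℝ) ^ k) • ∫ t, g (t + k) ∂Bin(n - k + m, p) := by
  rw [integral_prod _ (integrable_binomial_prod_binomial _ _ _ _ _)]
  simp_rw [integral_smul]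
  rw [integral_descFactorial_smul_binomial k n p fun x ↦ ∫ y, g (x + y) ∂Bin(m, p),
    ← binomial_conv_binomial,
    integral_conv (by rw [binomial_conv_binomial]; exact integrable_binomial _)]
  simp_rw [add_right_comm _ k]

lemma descFactorial_smul_integral_binomial_prod (k n m : ℕ) (p : unitInterval) (g : ℕ → E) :
    ((n + m).descFactorial k : ℝ) •
        ∫ z, (z.1.descFactorial k : ℝ) • g (z.1 + z.2) ∂(Bin(n, p).prod Bin(m, p))
      = (n.descFactorial k : ℝ) • ∫ t, (t.descFactorial k : ℝ) • g t ∂Bin(n + m, p) := by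
  rw [integral_descFactorial_fst_smul_binomial_prod, integral_descFactorial_smul_binomial,
    smul_smul, smul_smul, mul_left_comm]
  rcases lt_or_ge n k with hn | hn
  · simp [Nat.descFactorial_of_lt hn]
  · rw [Nat.sub_add_comm hn]

end FactorialMoments

lemma cast_descFactorial_three (R : Type*) [CommRing R] (n : ℕ) :
    (n.descFactorial 3 : R) = n * (n - 1) * (n - 2) := by
  match n with
  | 0 | 1 => simp
  | n + 2 =>
    simp only [Nat.descFactorial_succ, Nat.descFactorial_zero, Nat.add_sub_cancel]
    push_cast
    ring

lemma cast_cube_eq_descFactorial (R : Type*) [CommRing R] (x : ℕ) :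
    (x : R) ^ 3 = x.descFactorial 3 + 3 * x.descFactorial 2 + x.descFactorial 1 := by
  rw [cast_descFactorial_three, Nat.cast_descFactorial_two, Nat.descFactorial_one]
  ring

lemma mul_integral_cube_fst_mul_binomial_prod (n m : ℕ) (p : unitInterval) (g : ℕ → ℝ) :
    ((m : ℝ) + n) * (m + n - 1) * (m + n - 2) *
        ∫ z, (z.1 : ℝ) ^ 3 * g (z.1 + z.2) ∂(Bin(n, p).prod Bin(m, p))
      = n * ∫ t, (((n : ℝ) - 1) * (n - 2) * t ^ 2 + 3 * m * (n - 1) * t + m * (m - n)) * (t * g t)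
          ∂Bin(n + m, p) := by
  set μ := Bin(n, p).prod Bin(m, p)
  let A (k : ℕ) : ℝ := ∫ z, (z.1.descFactorial k : ℝ) • g (z.1 + z.2) ∂μ
  let B (k : ℕ) : ℝ := ∫ t, (t.descFactorial k : ℝ) • g t ∂Bin(n + m, p)
  have integral_fst : ∫ z, (z.1 : ℝ) ^ 3 * g (z.1 + z.2) ∂μ = A 3 + 3 * A 2 + A 1 := by
    rw [← integral_const_mul, ← integral_add, ← integral_add]
    · congr with z
      rw [cast_cube_eq_descFactorial]
      simp only [smul_eq_mul]
      ring
    all_goals exact integrable_binomial_prod_binomial _ _ _ _ _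
  have integral_sum : ∫ t, (((n : ℝ) - 1) * (n - 2) * t ^ 2 + 3 * m * (n - 1) * t
        + m * (m - n)) * (t * g t) ∂Bin(n + m, p)
      = (n - 1) * (n - 2) * B 3 + 3 * (n - 1) * (m + n - 2) * B 2
        + (m + n - 1) * (m + n - 2) * B 1 := by
    simp_rw [B, ← integral_const_mul]
    rw [← integral_add, ← integral_add]
    · congr with t
      rw [cast_descFactorial_three, Nat.cast_descFactorial_two, Nat.descFactorial_one]
      simp only [smul_eq_mul]
      ring
    all_goals exact integrable_binomial _
  have moment (k : ℕ) : ((n + m).descFactorial k : ℝ) * A k = n.descFactorial k * B k :=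
    descFactorial_smul_integral_binomial_prod k n m p g
  have moment_one := moment 1
  have moment_two := moment 2
  have moment_three := moment 3
  rw [Nat.descFactorial_one, Nat.descFactorial_one, Nat.cast_add] at moment_one
  rw [Nat.cast_descFactorial_two, Nat.cast_descFactorial_two, Nat.cast_add] at moment_two
  rw [cast_descFactorial_three, cast_descFactorial_three, Nat.cast_add] at moment_three
  rw [integral_fst, integral_sum]
  linear_combination moment_three + 3 * (m + n - 2 : ℝ) * moment_two
    + (m + n - 1 : ℝ) * (m + n - 2) * moment_one

lemma integral_cube_fst_mul_binomial_prod {n m : ℕ} (hmn : 3 ≤ m + n) (p : unitInterval)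
    (g : ℕ → ℝ) :
    ∫ z, (z.1 : ℝ) ^ 3 * g (z.1 + z.2) ∂(Bin(n, p).prod Bin(m, p))
      = n / (((m : ℝ) + n) * (m + n - 1) * (m + n - 2)) *
          ∫ t, (((n : ℝ) - 1) * (n - 2) * t ^ 2 + 3 * m * (n - 1) * t + m * (m - n)) * (t * g t)
            ∂Bin(n + m, p) := by
  have three_le : (3 : ℝ) ≤ m + n := by exact_mod_cast hmn
  have denom_ne_zero : ((m : ℝ) + n) * (m + n - 1) * (m + n - 2) ≠ 0 :=
    mul_ne_zero (mul_ne_zero (by linarith) (by linarith)) (by linarith)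
  rw [div_mul_eq_mul_div, eq_div_iff denom_ne_zero, mul_comm,
    mul_integral_cube_fst_mul_binomial_prod]

lemma mul_inv_sqrt_cube {x : ℝ} (hx : 0 ≤ x) : x * (√x ^ 3)⁻¹ = (√x)⁻¹ := by
  rcases hx.eq_or_lt with rfl | x_pos
  · simp
  · rw [pow_succ, Real.sq_sqrt hx, mul_inv, mul_inv_cancel_left₀ x_pos.ne']

lemma hasLaw_binomial_of_measure_eq {Ω : Type*} [MeasurableSpace Ω] {P : Measure Ω} {X : Ω → ℕ}
    (hX : AEMeasurable X P) {n : ℕ} {p : unitInterval}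
    (h : ∀ j, P {ω | X ω = j} = ENNReal.ofReal (n.choose j * (p : ℝ) ^ j * (1 - p) ^ (n - j))) :
    HasLaw X Bin(n, p) P where
  map_eq := Measure.ext_of_singleton fun j ↦ by
    rw [Measure.map_apply_of_aemeasurable hX (measurableSet_singleton j), binomial_singleton]
    exact h j

/-- Let `X ~ Binomial(n,p)` and `Y ~ Binomial(m,p)` be independent and
`Z = X/√(X+Y)` (with `Z = 0` when `X+Y = 0`), `m + n ≥ 3`.  Then, with `T ~ Binomial(m+n,p)`,
`E[Z³] = (n/((m+n)(m+n−1)(m+n−2))) · E[((n−1)(n−2)T² + 3m(n−1)T + m(m−n)) T^{−1/2} 1_{T≥1}]`,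
the latter expectation written out as a sum over the binomial distribution. -/
theorem dampedBinomial_third_moment (n m : ℕ) (hnm : 3 ≤ m + n) (p : ℝ)
    (hp : p ∈ Set.Icc (0 : ℝ) 1)
    (Ω : Type) [MeasurableSpace Ω] (Pr : Measure Ω) [IsProbabilityMeasure Pr]
    (X Y : Ω → ℕ) (hX : Measurable X) (hY : Measurable Y)
    (hind : IndepFun X Y Pr)
    (hlawX : ∀ j : ℕ, Pr {ω | X ω = j}
      = ENNReal.ofReal ((n.choose j : ℝ) * p ^ j * (1 - p) ^ (n - j)))
    (hlawY : ∀ j : ℕ, Pr {ω | Y ω = j}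
      = ENNReal.ofReal ((m.choose j : ℝ) * p ^ j * (1 - p) ^ (m - j))) :
    ∫ ω, ((X ω : ℝ) / Real.sqrt ((X ω : ℝ) + (Y ω : ℝ))) ^ 3 ∂Pr
      = ((n : ℝ) / (((m : ℝ) + n) * ((m : ℝ) + n - 1) * ((m : ℝ) + n - 2)))
          * ∑ t ∈ Finset.Icc 1 (m + n),
              ((m + n).choose t : ℝ) * p ^ t * (1 - p) ^ (m + n - t) *
                ((((n : ℝ) - 1) * ((n : ℝ) - 2) * (t : ℝ) ^ 2
                    + 3 * (m : ℝ) * ((n : ℝ) - 1) * (t : ℝ)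
                    + (m : ℝ) * ((m : ℝ) - (n : ℝ)))
                  / Real.sqrt t) := by
  lift p to unitInterval using hp
  have hXY : HasLaw (fun ω ↦ (X ω, Y ω)) (Bin(n, p).prod Bin(m, p)) Pr :=
    (indepFun_iff_hasLaw_prodMk_prod (hasLaw_binomial_of_measure_eq hX.aemeasurable hlawX)
      (hasLaw_binomial_of_measure_eq hY.aemeasurable hlawY)).1 hind
  calc ∫ ω, ((X ω : ℝ) / √((X ω : ℝ) + Y ω)) ^ 3 ∂Pr
      = ∫ z, (z.1 : ℝ) ^ 3 * (√(z.1 + z.2 : ℕ) ^ 3)⁻¹ ∂(Bin(n, p).prod Bin(m, p)) := by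
        rw [← hXY.integral_comp .of_discrete]
        simp only [Function.comp_def, Nat.cast_add, div_eq_mul_inv, mul_pow, inv_pow]
    _ = n / (((m : ℝ) + n) * (m + n - 1) * (m + n - 2)) *
          ∫ t : ℕ, (((n : ℝ) - 1) * (n - 2) * t ^ 2 + 3 * m * (n - 1) * t + m * (m - n)) / √t
            ∂Bin(m + n, p) := by
        rw [integral_cube_fst_mul_binomial_prod hnm p fun t ↦ (√t ^ 3)⁻¹, add_comm n m]
        simp only [mul_inv_sqrt_cube (Nat.cast_nonneg _), div_eq_mul_inv]
    _ = _ := by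
        rw [integral_binomial_eq_sum_Icc_one _ _ (by simp)]
        rfl
end
end
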